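/- arXiv:2303.08368 — 2 statements merged into one kernel-verified Lean document; each statement's English description precedes it below -/
import Mathlib

section
/- (Theorem 2, part 2) The vector u_2 − exp(j·ε_rx,K)·u_3 belongs to the non-signal subspace of the noiseless auto-correlation matrix: R · (u_2 − exp(j·ε_rx,K)·u_3) = 0. -/
open scoped BigOperators

/-- Steering vector `a(ε) ∈ ℂ^{n+1}` with entries `exp(j·i·ε)`, `i = 0,…,n`. -/
noncomputable def steer (n : ℕ) (ε : ℝ) : Fin (n + 1) → ℂ :=
  fun i => Complex.exp (Complex.I * ((i : ℕ) : ℂ) * (ε : ℂ))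

/-- The vector `E(η_1,…,η_m) ∈ ℂ^{m+1}` defined recursively by
`E(η_1) = (1, −exp(j·η_1))` and
`E(η_1,…,η_p) = (E(η_1,…,η_{p−1}), 0) − exp(j·η_p)·(0, E(η_1,…,η_{p−1}))`
(with base case `E() = (1)`, which reproduces the stated base case at `m = 1`). -/
noncomputable def Evec : (m : ℕ) → (Fin m → ℝ) → (Fin (m + 1) → ℂ)
  | 0, _ => fun _ => 1
  | m + 1, η => fun i =>
      Fin.snoc (α := fun _ => ℂ) (Evec m fun j => η j.castSucc) 0 i -
        Complex.exp (Complex.I * (η (Fin.last m) : ℂ)) *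
          Fin.cons (α := fun _ => ℂ) 0 (Evec m fun j => η j.castSucc) i

/-- The cyclic down-shift matrix on `ℂ^{n+1}`: `(Lv)_0 = v_n`, `(Lv)_i = v_{i−1}` for `i ≥ 1`. -/
def Lmat (n : ℕ) : Matrix (Fin (n + 1)) (Fin (n + 1)) ℂ :=
  Matrix.of fun i l => if l = i - 1 then 1 else 0

/-- Kronecker product of vectors: `(v ⊗ w)_{(i,l)} = v_i · w_l`. -/
def kron {a b : Type*} (v : a → ℂ) (w : b → ℂ) : a × b → ℂ :=
  fun p => v p.1 * w p.2

/-- `x^† y = Σ_i conj(x_i) · y_i`. -/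
noncomputable def ip {n : Type*} [Fintype n] (x y : n → ℂ) : ℂ :=
  ∑ i, (starRingEnd ℂ) (x i) * y i

/-- `x^† M y = Σ_{i,l} conj(x_i) · M_{i,l} · y_l`. -/
noncomputable def qf {n : Type*} [Fintype n] (x : n → ℂ) (M : Matrix n n ℂ) (y : n → ℂ) : ℂ :=
  ∑ i, ∑ l, (starRingEnd ℂ) (x i) * M i l * y l

/-- `E(η_1,…,η_Kp) ∈ ℂ^{Kp+1}` padded with a trailing zero, giving a vector in `ℂ^{Kp+2}`. -/
noncomputable def Epad (Kp : ℕ) (η : Fin Kp → ℝ) : Fin (Kp + 2) → ℂ :=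
  Fin.snoc (Evec Kp η) 0

/-- `u_0 = Ẽ_tx ⊗ Ẽ_rx`. -/
noncomputable def u0 (Kp : ℕ) (ηt ηr : Fin Kp → ℝ) : Fin (Kp + 2) × Fin (Kp + 2) → ℂ :=
  kron (Epad Kp ηt) (Epad Kp ηr)

/-- `u_1 = Ẽ_tx ⊗ (L·Ẽ_rx)`. -/
noncomputable def u1 (Kp : ℕ) (ηt ηr : Fin Kp → ℝ) : Fin (Kp + 2) × Fin (Kp + 2) → ℂ :=
  kron (Epad Kp ηt) ((Lmat (Kp + 1)).mulVec (Epad Kp ηr))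

/-- `u_2 = (L·Ẽ_tx) ⊗ Ẽ_rx`. -/
noncomputable def u2 (Kp : ℕ) (ηt ηr : Fin Kp → ℝ) : Fin (Kp + 2) × Fin (Kp + 2) → ℂ :=
  kron ((Lmat (Kp + 1)).mulVec (Epad Kp ηt)) (Epad Kp ηr)

/-- `u_3 = (L·Ẽ_tx) ⊗ (L·Ẽ_rx)`. -/
noncomputable def u3 (Kp : ℕ) (ηt ηr : Fin Kp → ℝ) : Fin (Kp + 2) × Fin (Kp + 2) → ℂ :=
  kron ((Lmat (Kp + 1)).mulVec (Epad Kp ηt)) ((Lmat (Kp + 1)).mulVec (Epad Kp ηr))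

/-- The noiseless auto-correlation matrix `R = Σ_{k=1}^K σ_k² A_k A_k^†`, where
`A_k = a(ε_tx,k) ⊗ a(ε_rx,k)` and `σsq k` is the power `σ_k²`. -/
noncomputable def Rmat (K : ℕ) (εtx εrx σsq : Fin K → ℝ) :
    Matrix (Fin (K + 1) × Fin (K + 1)) (Fin (K + 1) × Fin (K + 1)) ℂ :=
  Matrix.of fun p q => ∑ k, (σsq k : ℂ) *
    kron (steer K (εtx k)) (steer K (εrx k)) p *
    (starRingEnd ℂ) (kron (steer K (εtx k)) (steer K (εrx k)) q)

/-- The rank-one matrix `R_ε = a(ε) a(ε)^† ∈ ℂ^{(Kp+2)×(Kp+2)}`. -/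
noncomputable def Rsingle (Kp : ℕ) (ε : ℝ) : Matrix (Fin (Kp + 2)) (Fin (Kp + 2)) ℂ :=
  Matrix.of fun i l => steer (Kp + 1) ε i * (starRingEnd ℂ) (steer (Kp + 1) ε l)

/-- The iDEA cost `Q_tx(φ) = (u_1 − exp(j·φ)·u_3)^† R (u_1 − exp(j·φ)·u_3)`. -/
noncomputable def Qcost (Kp : ℕ) (εtx εrx σsq : Fin (Kp + 1) → ℝ)
    (ηt ηr : Fin Kp → ℝ) (φ : ℝ) : ℂ :=
  qf (u1 Kp ηt ηr - Complex.exp (Complex.I * (φ : ℂ)) • u3 Kp ηt ηr)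
    (Rmat (Kp + 1) εtx εrx σsq)
    (u1 Kp ηt ηr - Complex.exp (Complex.I * (φ : ℂ)) • u3 Kp ηt ηr)

/-- The closed-form value `4^{2K−1} · Σ_k σ_k² sin²((ε_tx,k − φ)/2) ∏_m sin²((ε_tx,k − ε̂_tx,m)/2)
∏_n sin²((ε_rx,k − ε̂_rx,n)/2)` (here `K = Kp + 1`, so `2K − 1 = 2·Kp + 1`). -/
noncomputable def Ssum (Kp : ℕ) (εtx εrx σsq : Fin (Kp + 1) → ℝ)
    (ηt ηr : Fin Kp → ℝ) (φ : ℝ) : ℝ :=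
  (4 : ℝ) ^ (2 * Kp + 1) * ∑ k, σsq k * Real.sin ((εtx k - φ) / 2) ^ 2 *
    (∏ m, Real.sin ((εtx k - ηt m) / 2) ^ 2) *
    (∏ n, Real.sin ((εrx k - ηr n) / 2) ^ 2)

/-- The `k = K` term of `Ssum`, i.e. the lower bound
`4^{2K−1} · σ_K² sin²((ε_tx,K − φ)/2) ∏_m sin²((ε_tx,K − ε̂_tx,m)/2) ∏_n sin²((ε_rx,K − ε̂_rx,n)/2)`. -/
noncomputable def Slb (Kp : ℕ) (εtx εrx σsq : Fin (Kp + 1) → ℝ)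
    (ηt ηr : Fin Kp → ℝ) (φ : ℝ) : ℝ :=
  (4 : ℝ) ^ (2 * Kp + 1) * σsq (Fin.last Kp) *
    Real.sin ((εtx (Fin.last Kp) - φ) / 2) ^ 2 *
    (∏ m, Real.sin ((εtx (Fin.last Kp) - ηt m) / 2) ^ 2) *
    (∏ n, Real.sin ((εrx (Fin.last Kp) - ηr n) / 2) ^ 2)

/-!
Since `L` maps `(v, 0)` to `(0, v)`, the recursion defining `E` reads
`Ẽ_rx − exp(j·ε_rx,K)·(L·Ẽ_rx) = E(ε_rx,1,…,ε_rx,K)`, so that `u_2 − exp(j·ε_rx,K)·u_3` is the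
Kronecker product of `L·Ẽ_tx` with `E(ε_rx,1,…,ε_rx,K)`. Pairing a vector with `a(ε)` evaluates its
generating polynomial at `exp(−j·ε)`, and the generating polynomial of `E(η_1,…,η_m)` is
`∏_k (1 − exp(j·η_k)·z)`. Hence `E(ε_rx,1,…,ε_rx,K)` is orthogonal to every `a(ε_rx,k)`, and the
product is orthogonal to every `A_k`, whatever its transmit factor.
-/

open Matrix

section steer

variable (n : ℕ) (ε : ℝ)

lemma steer_zero : steer n ε 0 = 1 := by
  simp [steer]

lemma steer_castSucc (i : Fin (n + 1)) : steer (n + 1) ε i.castSucc = steer n ε i :=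
  rfl

lemma steer_succ (i : Fin (n + 1)) :
    steer (n + 1) ε i.succ = Complex.exp (Complex.I * ε) * steer n ε i := by
  simp only [steer, Fin.val_succ, ← Complex.exp_add]
  push_cast
  ring_nf

lemma star_steer_dotProduct_snoc_zero (v : Fin (n + 1) → ℂ) :
    star (steer (n + 1) ε) ⬝ᵥ (Fin.snoc v 0 : Fin (n + 2) → ℂ) = star (steer n ε) ⬝ᵥ v := by
  simp [dotProduct, Fin.sum_univ_castSucc, steer_castSucc]

lemma star_steer_dotProduct_cons_zero (v : Fin (n + 1) → ℂ) :
    star (steer (n + 1) ε) ⬝ᵥ (Fin.cons 0 v : Fin (n + 2) → ℂ) =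
      Complex.exp (-(Complex.I * ε)) * (star (steer n ε) ⬝ᵥ v) := by
  have star_exp : star (Complex.exp (Complex.I * ε)) = Complex.exp (-(Complex.I * ε)) := by
    simp [← Complex.exp_conj]
  rw [dotProduct, dotProduct, Fin.sum_univ_succ, Finset.mul_sum]
  simp only [Pi.star_apply, steer_succ, star_mul', star_exp, Fin.cons_zero, Fin.cons_succ,
    mul_zero, zero_add, mul_assoc]

end steer

section Evec

variable {m : ℕ}

lemma Evec_succ (η : Fin (m + 1) → ℝ) :
    Evec (m + 1) η =
      (Fin.snoc (Evec m fun i => η i.castSucc) 0 : Fin (m + 2) → ℂ) -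
        Complex.exp (Complex.I * η (Fin.last m)) • Fin.cons 0 (Evec m fun i => η i.castSucc) :=
  rfl

lemma star_steer_dotProduct_Evec (ε : ℝ) (η : Fin m → ℝ) :
    star (steer m ε) ⬝ᵥ Evec m η = ∏ k, (1 - Complex.exp (Complex.I * (η k - ε))) := by
  induction m with
  | zero => simp [dotProduct, Evec, steer_zero]
  | succ m ih =>
    have exp_mul_exp (θ : ℝ) : Complex.exp (Complex.I * θ) * Complex.exp (-(Complex.I * ε)) =
        Complex.exp (Complex.I * (θ - ε)) := by
      rw [← Complex.exp_add]
      ring_nf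
    rw [Evec_succ, dotProduct_sub, dotProduct_smul, star_steer_dotProduct_snoc_zero,
      star_steer_dotProduct_cons_zero, smul_eq_mul, ← mul_assoc, exp_mul_exp, ih,
      Fin.prod_univ_castSucc]
    ring

lemma star_steer_dotProduct_Evec_self (η : Fin m → ℝ) (k : Fin m) :
    star (steer m (η k)) ⬝ᵥ Evec m η = 0 := by
  rw [star_steer_dotProduct_Evec]
  exact Finset.prod_eq_zero (Finset.mem_univ k) (by simp)

end Evec

lemma Lmat_mulVec_apply (n : ℕ) (v : Fin (n + 1) → ℂ) (i : Fin (n + 1)) :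
    (Lmat n *ᵥ v) i = v (i - 1) := by
  simp [Lmat, mulVec, dotProduct]

lemma Lmat_mulVec_snoc (n : ℕ) (v : Fin n → ℂ) (x : ℂ) :
    Lmat n *ᵥ (Fin.snoc v x : Fin (n + 1) → ℂ) = (Fin.cons x v : Fin (n + 1) → ℂ) := by
  funext i
  rw [Lmat_mulVec_apply]
  cases i using Fin.cases with
  | zero =>
    have zero_sub_one : (0 : Fin (n + 1)) - 1 = Fin.last n := by
      rw [sub_eq_iff_eq_add, Fin.last_add_one]
    rw [zero_sub_one, Fin.snoc_last, Fin.cons_zero]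
  | succ i =>
    have succ_sub_one : i.succ - 1 = i.castSucc := by
      rw [sub_eq_iff_eq_add, Fin.coeSucc_eq_succ]
    rw [succ_sub_one, Fin.snoc_castSucc, Fin.cons_succ]

lemma Epad_sub_smul_Lmat_mulVec_Epad {m : ℕ} (η : Fin (m + 1) → ℝ) :
    Epad m (fun i => η i.castSucc) - Complex.exp (Complex.I * η (Fin.last m)) •
      (Lmat (m + 1) *ᵥ Epad m fun i => η i.castSucc) = Evec (m + 1) η := by
  rw [Evec_succ, Epad, Lmat_mulVec_snoc]

section kron

variable {a b : Type*}

lemma star_kron (v : a → ℂ) (w : b → ℂ) : star (kron v w) = kron (star v) (star w) := by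
  funext p
  simp [kron]

lemma kron_sub_smul (c : ℂ) (v : a → ℂ) (w w' : b → ℂ) :
    kron v (w - c • w') = kron v w - c • kron v w' := by
  funext p
  simp only [kron, Pi.sub_apply, Pi.smul_apply, smul_eq_mul]
  ring

lemma kron_dotProduct_kron [Fintype a] [Fintype b] (v v' : a → ℂ) (w w' : b → ℂ) :
    kron v w ⬝ᵥ kron v' w' = (v ⬝ᵥ v') * (w ⬝ᵥ w') := by
  simp only [dotProduct, kron, Fintype.sum_prod_type, Finset.sum_mul_sum, mul_mul_mul_comm]

end kron

lemma u2_sub_smul_u3 {m : ℕ} (ηt : Fin m → ℝ) (η : Fin (m + 1) → ℝ) :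
    u2 m ηt (fun i => η i.castSucc) -
        Complex.exp (Complex.I * η (Fin.last m)) • u3 m ηt (fun i => η i.castSucc) =
      kron (Lmat (m + 1) *ᵥ Epad m ηt) (Evec (m + 1) η) := by
  rw [u2, u3, ← kron_sub_smul, Epad_sub_smul_Lmat_mulVec_Epad]

lemma Rmat_mulVec {K : ℕ} (εtx εrx σsq : Fin K → ℝ) (x : Fin (K + 1) × Fin (K + 1) → ℂ) :
    Rmat K εtx εrx σsq *ᵥ x =
      ∑ k, (σsq k * (star (kron (steer K (εtx k)) (steer K (εrx k))) ⬝ᵥ x)) •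
        kron (steer K (εtx k)) (steer K (εrx k)) := by
  funext p
  simp only [mulVec, dotProduct, Rmat, of_apply, Finset.sum_apply, Pi.smul_apply, smul_eq_mul,
    Pi.star_apply, starRingEnd_apply, Finset.sum_mul, Finset.mul_sum]
  rw [Finset.sum_comm]
  exact Finset.sum_congr rfl fun k _ => Finset.sum_congr rfl fun q _ => by ring

theorem statement7_general {K : ℕ} (εtx εrx σsq : Fin K → ℝ) (v : Fin (K + 1) → ℂ) :
    Rmat K εtx εrx σsq *ᵥ kron v (Evec K εrx) = 0 := by
  rw [Rmat_mulVec]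
  refine Finset.sum_eq_zero fun k _ => ?_
  rw [star_kron, kron_dotProduct_kron, star_steer_dotProduct_Evec_self, mul_zero, mul_zero,
    zero_smul]

/-- Theorem 2, part 2: R · (u_2 − exp(j·ε_rx,K)·u_3) = 0. -/
theorem statement7 (Kp : ℕ) (hKp : 1 ≤ Kp) (εtx εrx : Fin (Kp + 1) → ℝ)
    (σsq : Fin (Kp + 1) → ℝ) (hσ : ∀ k, 0 < σsq k) :
    (Rmat (Kp + 1) εtx εrx σsq).mulVec
      (u2 Kp (fun i => εtx i.castSucc) (fun i => εrx i.castSucc) - Complex.exp (Complex.I * (εrx (Fin.last Kp) : ℂ)) • u3 Kp (fun i => εtx i.castSucc) (fun i => εrx i.castSucc)) = 0 := by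
  rw [u2_sub_smul_u3]
  exact statement7_general εtx εrx σsq _
end

section
/- (Corollary 1, equation (18)) If u_0^† R u_3 ≠ 0, then exp(j·ε_tx,K)·exp(j·ε_rx,K) = (u_0^† R u_0) / (u_0^† R u_3). -/
open scoped BigOperators

/-
`a(ε)^† v` is the value at `z = exp(-jε)` of the polynomial with coefficient vector `v`. The vector
`E(η_1,…,η_m)` collects the coefficients of `∏ (1 - exp(jη_l) z)`, so it is orthogonal to
`a(η_1),…,a(η_m)`, and shifting a vector whose last entry is zero multiplies its polynomial by `z`.
Therefore `u_0` is orthogonal to every `A_k` except the last, so that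
`u_0^† R y = σ_K² (u_0^† A_K)(A_K^† y)` for all `y`, and passing from `y = u_0` to `y = u_3`
multiplies `A_K^† y` by `exp(-jε_tx,K) exp(-jε_rx,K)`.
-/

theorem sum_snoc_zero_mul_pow {R : Type*} [Semiring R] {n : ℕ} (v : Fin n → R) (z : R) :
    ∑ i, Fin.snoc (α := fun _ => R) v 0 i * z ^ (i : ℕ) = ∑ i, v i * z ^ (i : ℕ) := by
  simp [Fin.sum_univ_castSucc]

theorem sum_cons_zero_mul_pow {R : Type*} [Semiring R] {n : ℕ} (v : Fin n → R) (z : R) :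
    ∑ i, Fin.cons (α := fun _ => R) 0 v i * z ^ (i : ℕ) = (∑ i, v i * z ^ (i : ℕ)) * z := by
  simp [Fin.sum_univ_succ, pow_succ, Finset.sum_mul, mul_assoc]

theorem sum_Evec_mul_pow (m : ℕ) (η : Fin m → ℝ) (z : ℂ) :
    ∑ i, Evec m η i * z ^ (i : ℕ) = ∏ l, (1 - Complex.exp (Complex.I * (η l : ℂ)) * z) := by
  induction m with
  | zero => simp [Evec]
  | succ m ih =>
    simp only [Evec, sub_mul, mul_assoc, Finset.sum_sub_distrib, ← Finset.mul_sum,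
      sum_snoc_zero_mul_pow, sum_cons_zero_mul_pow, ih, Fin.prod_univ_castSucc]
    ring

theorem ip_steer (n : ℕ) (ε : ℝ) (v : Fin (n + 1) → ℂ) :
    ip (steer n ε) v = ∑ i, v i * Complex.exp (-(Complex.I * (ε : ℂ))) ^ (i : ℕ) := by
  refine Finset.sum_congr rfl fun i _ => ?_
  have conj_steer : (starRingEnd ℂ) (steer n ε i) =
      Complex.exp (-(Complex.I * (ε : ℂ))) ^ (i : ℕ) := by
    rw [steer, ← Complex.exp_conj, ← Complex.exp_nat_mul]
    simp only [map_mul, Complex.conj_I, Complex.conj_ofReal, map_natCast]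
    congr 1
    ring
  rw [conj_steer, mul_comm]

theorem ip_steer_Epad_eq_zero {m : ℕ} {η : Fin m → ℝ} {ε : ℝ} (hε : ε ∈ Set.range η) :
    ip (steer (m + 1) ε) (Epad m η) = 0 := by
  obtain ⟨l, rfl⟩ := hε
  rw [ip_steer, Epad, sum_snoc_zero_mul_pow, sum_Evec_mul_pow]
  refine Finset.prod_eq_zero (Finset.mem_univ l) ?_
  rw [← Complex.exp_add, add_neg_cancel, Complex.exp_zero, sub_self]

theorem Lmat_mulVec (n : ℕ) (v : Fin (n + 1) → ℂ) :
    (Lmat n).mulVec v = fun i => v (i - 1) := by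
  ext i
  simp [Lmat, Matrix.mulVec, dotProduct]

theorem Lmat_mulVec_snoc_s11 {n : ℕ} (v : Fin n → ℂ) (c : ℂ) :
    (Lmat n).mulVec (Fin.snoc v c) = Fin.cons (α := fun _ => ℂ) c v := by
  rw [Lmat_mulVec]
  ext i
  cases i using Fin.cases with
  | zero =>
    have zero_sub_one : (0 : Fin (n + 1)) - 1 = Fin.last n := by
      rw [sub_eq_iff_eq_add, Fin.last_add_one]
    rw [zero_sub_one, Fin.snoc_last, Fin.cons_zero]
  | succ i =>
    have succ_sub_one : i.succ - 1 = i.castSucc := by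
      rw [sub_eq_iff_eq_add, Fin.coeSucc_eq_succ]
    rw [succ_sub_one, Fin.snoc_castSucc, Fin.cons_succ]

theorem exp_mul_ip_steer_Lmat_mulVec_snoc_zero {n : ℕ} (ε : ℝ) (v : Fin n → ℂ) :
    Complex.exp (Complex.I * (ε : ℂ)) * ip (steer n ε) ((Lmat n).mulVec (Fin.snoc v 0)) =
      ip (steer n ε) (Fin.snoc v 0) := by
  rw [Lmat_mulVec_snoc_s11, ip_steer, ip_steer, sum_cons_zero_mul_pow, sum_snoc_zero_mul_pow,
    mul_left_comm, ← Complex.exp_add, add_neg_cancel, Complex.exp_zero, mul_one]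

theorem conj_ip {n : Type*} [Fintype n] (x y : n → ℂ) : (starRingEnd ℂ) (ip x y) = ip y x := by
  simp [ip, mul_comm]

theorem ip_kron {a b : Type*} [Fintype a] [Fintype b] (x v : a → ℂ) (y w : b → ℂ) :
    ip (kron x y) (kron v w) = ip x v * ip y w := by
  simp only [ip, kron, map_mul, Fintype.sum_prod_type, Finset.sum_mul_sum, mul_mul_mul_comm]

theorem qf_Rmat (K : ℕ) (εtx εrx σsq : Fin K → ℝ) (x y : Fin (K + 1) × Fin (K + 1) → ℂ) :
    qf x (Rmat K εtx εrx σsq) y =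
      ∑ k, (σsq k : ℂ) * (ip x (kron (steer K (εtx k)) (steer K (εrx k))) *
        ip (kron (steer K (εtx k)) (steer K (εrx k))) y) := by
  simp only [qf, Rmat, Matrix.of_apply, Finset.mul_sum, Finset.sum_mul]
  rw [Finset.sum_comm_cycle]
  refine Finset.sum_congr rfl fun k _ => ?_
  simp_rw [ip, Finset.sum_mul_sum, Finset.mul_sum]
  refine Finset.sum_congr rfl fun p _ => Finset.sum_congr rfl fun q _ => ?_
  ring

theorem ip_u0_kron_steer_eq_zero {m : ℕ} {ηt ηr : Fin m → ℝ} {εt εr : ℝ}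
    (h : εt ∈ Set.range ηt ∨ εr ∈ Set.range ηr) :
    ip (u0 m ηt ηr) (kron (steer (m + 1) εt) (steer (m + 1) εr)) = 0 := by
  rw [← conj_ip, u0, ip_kron]
  rcases h with ht | hr
  · rw [ip_steer_Epad_eq_zero ht, zero_mul, map_zero]
  · rw [ip_steer_Epad_eq_zero hr, mul_zero, map_zero]

theorem exp_mul_exp_mul_ip_kron_steer_u3 {m : ℕ} (ηt ηr : Fin m → ℝ) (εt εr : ℝ) :
    Complex.exp (Complex.I * (εt : ℂ)) * Complex.exp (Complex.I * (εr : ℂ)) *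
        ip (kron (steer (m + 1) εt) (steer (m + 1) εr)) (u3 m ηt ηr) =
      ip (kron (steer (m + 1) εt) (steer (m + 1) εr)) (u0 m ηt ηr) := by
  rw [u3, u0, ip_kron, ip_kron, mul_mul_mul_comm, Epad, Epad,
    exp_mul_ip_steer_Lmat_mulVec_snoc_zero, exp_mul_ip_steer_Lmat_mulVec_snoc_zero]

theorem qf_u0_Rmat {m : ℕ} {εtx εrx : Fin (m + 1) → ℝ} (σsq : Fin (m + 1) → ℝ)
    {ηt ηr : Fin m → ℝ} {k₀ : Fin (m + 1)}
    (hη : ∀ k ≠ k₀, εtx k ∈ Set.range ηt ∨ εrx k ∈ Set.range ηr)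
    (y : Fin (m + 2) × Fin (m + 2) → ℂ) :
    qf (u0 m ηt ηr) (Rmat (m + 1) εtx εrx σsq) y =
      (σsq k₀ : ℂ) *
        (ip (u0 m ηt ηr) (kron (steer (m + 1) (εtx k₀)) (steer (m + 1) (εrx k₀))) *
          ip (kron (steer (m + 1) (εtx k₀)) (steer (m + 1) (εrx k₀))) y) := by
  rw [qf_Rmat]
  refine Fintype.sum_eq_single k₀ fun k hk => ?_
  rw [ip_u0_kron_steer_eq_zero (hη k hk), zero_mul, mul_zero]

theorem statement11_general {m : ℕ} {εtx εrx σsq : Fin (m + 1) → ℝ} {ηt ηr : Fin m → ℝ}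
    {k₀ : Fin (m + 1)} (hη : ∀ k ≠ k₀, εtx k ∈ Set.range ηt ∨ εrx k ∈ Set.range ηr)
    (hden : qf (u0 m ηt ηr) (Rmat (m + 1) εtx εrx σsq) (u3 m ηt ηr) ≠ 0) :
    Complex.exp (Complex.I * (εtx k₀ : ℂ)) * Complex.exp (Complex.I * (εrx k₀ : ℂ)) =
      qf (u0 m ηt ηr) (Rmat (m + 1) εtx εrx σsq) (u0 m ηt ηr) /
        qf (u0 m ηt ηr) (Rmat (m + 1) εtx εrx σsq) (u3 m ηt ηr) := by
  rw [eq_div_iff hden, qf_u0_Rmat σsq hη, qf_u0_Rmat σsq hη,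
    ← exp_mul_exp_mul_ip_kron_steer_u3 ηt ηr]
  ring

/-- Corollary 1, eq. (18): if u_0^† R u_3 ≠ 0, then
exp(j·ε_tx,K)·exp(j·ε_rx,K) = (u_0^† R u_0) / (u_0^† R u_3). -/
theorem statement11 (Kp : ℕ) (hKp : 1 ≤ Kp) (εtx εrx : Fin (Kp + 1) → ℝ)
    (σsq : Fin (Kp + 1) → ℝ) (hσ : ∀ k, 0 < σsq k)
    (hden : qf (u0 Kp (fun i => εtx i.castSucc) (fun i => εrx i.castSucc)) (Rmat (Kp + 1) εtx εrx σsq)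
        (u3 Kp (fun i => εtx i.castSucc) (fun i => εrx i.castSucc)) ≠ 0) :
    Complex.exp (Complex.I * (εtx (Fin.last Kp) : ℂ)) * Complex.exp (Complex.I * (εrx (Fin.last Kp) : ℂ)) =
      qf (u0 Kp (fun i => εtx i.castSucc) (fun i => εrx i.castSucc)) (Rmat (Kp + 1) εtx εrx σsq)
          (u0 Kp (fun i => εtx i.castSucc) (fun i => εrx i.castSucc)) /
        qf (u0 Kp (fun i => εtx i.castSucc) (fun i => εrx i.castSucc)) (Rmat (Kp + 1) εtx εrx σsq)
          (u3 Kp (fun i => εtx i.castSucc) (fun i => εrx i.castSucc)) := by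
  refine statement11_general (fun k hk => Or.inl ?_) hden
  exact ⟨k.castPred hk, congrArg εtx (k.castSucc_castPred hk)⟩
end
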